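/- arXiv:1409.5767 — 5 statements merged into one kernel-verified Lean document; each statement's English description precedes it below -/
import Mathlib

section
/- Let n ≥ 1 and let S be an n × n matrix with natural-number entries, each entry being 0 or 1. For every positive integer N, the cardinality of the set of aperiodic closed walks of length N equals ∑_{g | N} μ(g) · Tr(S^{N/g}), where the sum runs over the positive divisors g of N and μ is the classical Möbius function. -/
/-- A closed walk of length `N` with respect to an `n × n` zero-one matrix `S`:
a function `f : ZMod N → Fin n` such that consecutive vertices are adjacent. -/
def IsClosedWalk {n : ℕ} (S : Matrix (Fin n) (Fin n) ℕ) {N : ℕ}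
    (f : ZMod N → Fin n) : Prop :=
  ∀ k : ZMod N, S (f k) (f (k + 1)) = 1

/-- A closed walk is aperiodic if no nonzero rotation fixes it. -/
def IsAperiodic {n N : ℕ} (f : ZMod N → Fin n) : Prop :=
  ∀ d : ZMod N, d ≠ 0 → ∃ k : ZMod N, f (k + d) ≠ f k

open Function

/-- The entries of a matrix power as a sum over paths, a path from `i` to `j` being given by its
interior vertices. -/
theorem Matrix.pow_succ_apply_eq_sum_prod {ι R : Type*} [Fintype ι] [DecidableEq ι]
    [CommSemiring R] (S : Matrix ι ι R) (m : ℕ) (i j : ι) :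
    (S ^ (m + 1)) i j = ∑ p : Fin m → ι, ∏ k : Fin (m + 1),
      S (Fin.cons (α := fun _ => ι) i p k) (Fin.snoc (α := fun _ => ι) p j k) := by
  induction m generalizing i with
  | zero => simp [Fin.snoc]
  | succ m ih =>
    rw [pow_succ', Matrix.mul_apply, ← (Fin.consEquiv fun _ : Fin (m + 1) => ι).sum_comp,
      Fintype.sum_prod_type]
    refine Finset.sum_congr rfl fun l _ => ?_
    rw [ih, Finset.mul_sum]
    refine Finset.sum_congr rfl fun p _ => ?_
    change _ = ∏ k, S (Fin.cons (α := fun _ => ι) i (Fin.cons (α := fun _ => ι) l p) k)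
      (Fin.snoc (α := fun _ => ι) (Fin.cons (α := fun _ => ι) l p) j k)
    rw [← Fin.cons_snoc_eq_snoc_cons, Fin.prod_univ_succ (n := m + 1)]
    simp only [Fin.cons_zero, Fin.cons_succ]

/-- The trace of a matrix power as a sum over cyclic sequences of indices. -/
theorem Matrix.trace_pow_succ_eq_sum_prod {ι R : Type*} [Fintype ι] [DecidableEq ι]
    [CommSemiring R] (S : Matrix ι ι R) (m : ℕ) :
    Matrix.trace (S ^ (m + 1)) =
      ∑ f : Fin (m + 1) → ι, ∏ k : Fin (m + 1), S (f k) (f (k + 1)) := by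
  rw [← (Fin.consEquiv fun _ : Fin (m + 1) => ι).sum_comp, Fintype.sum_prod_type]
  refine Finset.sum_congr rfl fun i _ => ?_
  rw [Matrix.diag_apply, Matrix.pow_succ_apply_eq_sum_prod]
  refine Finset.sum_congr rfl fun p _ => Finset.prod_congr rfl fun k _ => ?_
  congr 1
  induction k using Fin.lastCases with
  | last => simp
  | cast k => simp [Fin.coeSucc_eq_succ]

/-- The number of closed walks of length `N` is the trace of `S ^ N`. -/
theorem card_closedWalks {n : ℕ} (S : Matrix (Fin n) (Fin n) ℕ)
    (hS : ∀ i j, S i j = 0 ∨ S i j = 1) {N : ℕ} (hN : 0 < N) :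
    Nat.card {f : ZMod N → Fin n // IsClosedWalk S f} = Matrix.trace (S ^ N) := by
  classical
  obtain ⟨m, rfl⟩ := Nat.exists_eq_succ_of_ne_zero hN.ne'
  rw [Nat.succ_eq_add_one, Matrix.trace_pow_succ_eq_sum_prod, Nat.card_eq_fintype_card,
    Fintype.card_subtype, Finset.card_filter]
  refine Finset.sum_congr rfl fun f _ => ?_
  split_ifs with h
  · exact (Finset.prod_eq_one fun k _ => h k).symm
  · simp only [IsClosedWalk, not_forall] at h
    obtain ⟨k, hk⟩ := h
    exact (Finset.prod_eq_zero (Finset.mem_univ k) ((hS _ _).resolve_right hk)).symm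

/-- The left shift on one-sided sequences. -/
def leftShift {α : Type*} (x : ℕ → α) : ℕ → α := fun k => x (k + 1)

theorem leftShift_iterate_apply {α : Type*} (m : ℕ) (x : ℕ → α) (k : ℕ) :
    leftShift^[m] x k = x (k + m) := by
  induction m generalizing x with
  | zero => rfl
  | succ m ih => rw [iterate_succ_apply, ih]; rfl

theorem isPeriodicPt_leftShift_iff {α : Type*} {m : ℕ} {x : ℕ → α} :
    IsPeriodicPt leftShift m x ↔ ∀ k, x (k + m) = x k := by
  simp only [IsPeriodicPt, IsFixedPt, funext_iff, leftShift_iterate_apply]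

/-- Functions on `ZMod N` are the same as `N`-periodic sequences. -/
def periodicSequenceEquiv (α : Type*) (N : ℕ) [NeZero N] :
    (ZMod N → α) ≃ {x : ℕ → α // IsPeriodicPt leftShift N x} where
  toFun f := ⟨fun k => f k, isPeriodicPt_leftShift_iff.2 fun k => by simp⟩
  invFun x k := x.1 k.val
  left_inv f := by ext k; simp
  right_inv x := by
    ext k
    have h : Periodic x.1 N := isPeriodicPt_leftShift_iff.1 x.2
    simpa [ZMod.val_natCast] using h.map_mod_nat k

theorem isClosedWalk_iff_natCast {n : ℕ} (S : Matrix (Fin n) (Fin n) ℕ) {N : ℕ} [NeZero N]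
    (f : ZMod N → Fin n) :
    IsClosedWalk S f ↔ ∀ k : ℕ, S (f k) (f (k + 1 : ℕ)) = 1 := by
  simp only [Nat.cast_add, Nat.cast_one]
  exact (ZMod.natCast_zmod_surjective (n := N)).forall

theorem isAperiodic_iff_minimalPeriod {n N : ℕ} [NeZero N] (f : ZMod N → Fin n) :
    IsAperiodic f ↔ minimalPeriod leftShift (fun k : ℕ => f k) = N := by
  have hper : ∀ d : ℕ, IsPeriodicPt leftShift d (fun k : ℕ => f k) ↔
      ∀ k : ZMod N, f (k + d) = f k := fun d => by
    rw [isPeriodicPt_leftShift_iff, (ZMod.natCast_zmod_surjective (n := N)).forall]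
    simp only [Nat.cast_add]
  have hN : minimalPeriod leftShift (fun k : ℕ => f k) ∣ N :=
    ((hper N).2 fun k => by simp).minimalPeriod_dvd
  rw [IsAperiodic, (ZMod.natCast_zmod_surjective (n := N)).forall]
  simp only [ne_eq, ← not_forall, ← hper, not_imp_not, ZMod.natCast_eq_zero_iff,
    isPeriodicPt_iff_minimalPeriod_dvd]
  exact ⟨fun h => Nat.dvd_antisymm hN (h _ dvd_rfl), fun h d hd => h ▸ hd⟩

/-- Every periodic sequence has a unique minimal period, so that the closed walks of length `N`
are counted by the aperiodic closed walks of length dividing `N`. -/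
theorem sum_card_aperiodic_closedWalks {n : ℕ} (S : Matrix (Fin n) (Fin n) ℕ) {N : ℕ}
    (hN : 0 < N) :
    ∑ d ∈ N.divisors, Nat.card {f : ZMod d → Fin n // IsClosedWalk S f ∧ IsAperiodic f} =
      Nat.card {f : ZMod N → Fin n // IsClosedWalk S f} := by
  classical
  let walks : Set (ℕ → Fin n) := {x | ∀ k, S (x k) (x (k + 1)) = 1}
  have : NeZero N := ⟨hN.ne'⟩
  have hclosed : {f : ZMod N → Fin n // IsClosedWalk S f} ≃
      {x : {x : ℕ → Fin n // IsPeriodicPt leftShift N x} // x.1 ∈ walks} :=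
    (periodicSequenceEquiv (Fin n) N).subtypeEquiv fun f => isClosedWalk_iff_natCast S f
  have : Fintype {x : ℕ → Fin n // IsPeriodicPt leftShift N x} :=
    Fintype.ofEquiv _ (periodicSequenceEquiv (Fin n) N)
  rw [Nat.card_congr hclosed, Nat.card_eq_fintype_card, Fintype.card_subtype,
    Finset.card_eq_sum_card_fiberwise (t := N.divisors)
      (f := fun x => minimalPeriod leftShift x.1)
      fun x _ => Nat.mem_divisors.2 ⟨x.2.minimalPeriod_dvd, hN.ne'⟩]
  refine Finset.sum_congr rfl fun d hd => ?_
  have hdN := Nat.dvd_of_mem_divisors hd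
  have : NeZero d := ⟨(Nat.pos_of_mem_divisors hd).ne'⟩
  rw [Finset.filter_filter, ← Fintype.card_subtype, ← Nat.card_eq_fintype_card]
  have hd_equiv : {f : ZMod d → Fin n // IsClosedWalk S f ∧ IsAperiodic f} ≃
      {x : {x : ℕ → Fin n // IsPeriodicPt leftShift d x} //
        x.1 ∈ walks ∧ minimalPeriod leftShift x.1 = d} :=
    (periodicSequenceEquiv (Fin n) d).subtypeEquiv fun f =>
      and_congr (isClosedWalk_iff_natCast S f) (isAperiodic_iff_minimalPeriod f)
  have hforget : ∀ m, d ∣ m → Nonempty ({x : {x : ℕ → Fin n // IsPeriodicPt leftShift m x} //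
        x.1 ∈ walks ∧ minimalPeriod leftShift x.1 = d} ≃
      {x : ℕ → Fin n // x ∈ walks ∧ minimalPeriod leftShift x = d}) := fun m hm =>
    ⟨Equiv.subtypeSubtypeEquivSubtype
      (q := fun x : ℕ → Fin n => x ∈ walks ∧ minimalPeriod leftShift x = d) fun h =>
      isPeriodicPt_iff_minimalPeriod_dvd.2 (h.2 ▸ hm)⟩
  obtain ⟨e⟩ := hforget d dvd_rfl
  obtain ⟨e'⟩ := hforget N hdN
  exact Nat.card_congr ((hd_equiv.trans e).trans e'.symm)

theorem card_aperiodic_closedWalks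
    (n : ℕ) (hn : 1 ≤ n) (S : Matrix (Fin n) (Fin n) ℕ)
    (hS : ∀ i j, S i j = 0 ∨ S i j = 1) (N : ℕ) (hN : 0 < N) :
    (Nat.card {f : ZMod N → Fin n // IsClosedWalk S f ∧ IsAperiodic f} : ℤ) =
      ∑ g ∈ N.divisors,
        (ArithmeticFunction.moebius g) * ((Matrix.trace (S ^ (N / g)) : ℕ) : ℤ) := by
  have hsum : ∀ m > 0, ∑ d ∈ m.divisors,
      (Nat.card {f : ZMod d → Fin n // IsClosedWalk S f ∧ IsAperiodic f} : ℤ) =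
        ((Matrix.trace (S ^ m) : ℕ) : ℤ) := fun m hm => by
    rw [← card_closedWalks S hS hm, ← sum_card_aperiodic_closedWalks S hm, Nat.cast_sum]
  rw [← ArithmeticFunction.sum_eq_iff_sum_mul_moebius_eq.1 hsum N hN]
  simp only [Int.cast_id]
  exact Nat.sum_divisorsAntidiagonal
    fun a b => ArithmeticFunction.moebius a * ((Matrix.trace (S ^ b) : ℕ) : ℤ)
end

section
/- Let n ≥ 1 and let S be an n × n matrix with natural-number entries, each entry being 0 or 1, and let N be a positive integer. The additive group ZMod N acts on the set of aperiodic closed walks of length N by rotation, (d · f) k = f (k + d). Then N times the number of orbits of this action equals ∑_{g | N} μ(g) · Tr(S^{N/g}), the sum running over the positive divisors g of N. -/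
/-- The type of aperiodic closed walks of length `N`. -/
def AperiodicWalk {n : ℕ} (S : Matrix (Fin n) (Fin n) ℕ) (N : ℕ) : Type :=
  {f : ZMod N → Fin n // IsClosedWalk S f ∧ IsAperiodic f}

/-- The rotation action of the additive group `ZMod N` on aperiodic closed walks:
`d` sends `f` to `k ↦ f (k + d)`. -/
def rotAction {n : ℕ} (S : Matrix (Fin n) (Fin n) ℕ) (N : ℕ)
    (d : ZMod N) (f : AperiodicWalk S N) : AperiodicWalk S N :=
  ⟨fun k => f.1 (k + d), by
    obtain ⟨hw, ha⟩ := f.2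
    constructor
    · intro k; simpa [add_right_comm] using hw (k + d)
    · intro e he
      obtain ⟨k, hk⟩ := ha e he
      exact ⟨k - d, by simpa [add_right_comm, sub_add_cancel] using hk⟩⟩

/-- Two aperiodic closed walks are equivalent if one is a rotation of the other. -/
def RotRel {n : ℕ} (S : Matrix (Fin n) (Fin n) ℕ) (N : ℕ)
    (f g : AperiodicWalk S N) : Prop :=
  ∃ d : ZMod N, g = rotAction S N d f

/-- The left shift on sequences. -/
def seqShift {α : Type*} (x : ℕ → α) : ℕ → α := fun k => x (k + 1)

theorem seqShift_iterate {α : Type*} (m : ℕ) (x : ℕ → α) :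
    seqShift^[m] x = fun k => x (k + m) := by
  induction m generalizing x with
  | zero => rfl
  | succ m ih =>
    rw [Function.iterate_succ_apply, ih]
    rfl

theorem isPeriodicPt_seqShift_iff {α : Type*} {m : ℕ} {x : ℕ → α} :
    Function.IsPeriodicPt seqShift m x ↔ Function.Periodic x m := by
  rw [Function.IsPeriodicPt, Function.IsFixedPt, seqShift_iterate]
  exact funext_iff

/-- The `N`-periodic sequence determined by a function on `ZMod N`. -/
def periodicExtension {α : Type*} {N : ℕ} (f : ZMod N → α) : ℕ → α := fun k => f k

theorem periodicExtension_injective {α : Type*} {N : ℕ} [NeZero N] :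
    Function.Injective (periodicExtension : (ZMod N → α) → ℕ → α) := by
  intro f g h
  funext z
  simpa [periodicExtension] using congrFun h z.val

theorem periodic_periodicExtension {α : Type*} {N : ℕ} (f : ZMod N → α) :
    Function.Periodic (periodicExtension f) N := by
  intro k
  simp [periodicExtension]

theorem exists_periodicExtension_eq {α : Type*} {N : ℕ} {x : ℕ → α}
    (hx : Function.Periodic x N) : ∃ f : ZMod N → α, periodicExtension f = x := by
  refine ⟨fun z => x z.val, funext fun k => ?_⟩
  simp only [periodicExtension, ZMod.val_natCast]
  exact hx.map_mod_nat k

theorem periodic_periodicExtension_iff {α : Type*} {N : ℕ} [NeZero N] (f : ZMod N → α) (m : ℕ) :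
    Function.Periodic (periodicExtension f) m ↔ ∀ k, f (k + m) = f k := by
  refine ⟨fun h k => ?_, fun h k => ?_⟩
  · simpa [periodicExtension] using h k.val
  · simpa [periodicExtension] using h k

theorem isAperiodic_iff_minimalPeriod_eq {n N : ℕ} [NeZero N] (f : ZMod N → Fin n) :
    IsAperiodic f ↔ Function.minimalPeriod seqShift (periodicExtension f) = N := by
  have hper := isPeriodicPt_seqShift_iff.2 (periodic_periodicExtension f)
  constructor
  · intro h
    refine Nat.dvd_antisymm hper.minimalPeriod_dvd ?_
    rw [← ZMod.natCast_eq_zero_iff]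
    by_contra hne
    obtain ⟨k, hk⟩ := h _ hne
    exact hk ((periodic_periodicExtension_iff f _).1
      (isPeriodicPt_seqShift_iff.1 (Function.isPeriodicPt_minimalPeriod _ _)) k)
  · intro h d hd
    by_contra! hall
    refine hd ?_
    rw [← ZMod.natCast_zmod_val d, ZMod.natCast_eq_zero_iff]
    conv_lhs => rw [← h]
    refine Function.IsPeriodicPt.minimalPeriod_dvd (isPeriodicPt_seqShift_iff.2 ?_)
    rw [periodic_periodicExtension_iff]
    simpa using hall

/-- The one-sided infinite walks with respect to `S`. -/
def infiniteWalks {n : ℕ} (S : Matrix (Fin n) (Fin n) ℕ) : Set (ℕ → Fin n) :=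
  {x | ∀ k, S (x k) (x (k + 1)) = 1}

theorem periodicExtension_mem_infiniteWalks {n N : ℕ} [NeZero N]
    {S : Matrix (Fin n) (Fin n) ℕ} {f : ZMod N → Fin n} :
    periodicExtension f ∈ infiniteWalks S ↔ IsClosedWalk S f := by
  refine ⟨fun h k => ?_, fun h k => ?_⟩
  · simpa [periodicExtension] using h k.val
  · simpa [periodicExtension] using h k

theorem image_periodicExtension_isClosedWalk {n N : ℕ} [NeZero N]
    (S : Matrix (Fin n) (Fin n) ℕ) :
    Set.image periodicExtension {f : ZMod N → Fin n | IsClosedWalk S f} =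
      {x | x ∈ infiniteWalks S ∧ Function.IsPeriodicPt seqShift N x} := by
  ext x
  constructor
  · rintro ⟨f, hf, rfl⟩
    exact ⟨periodicExtension_mem_infiniteWalks.2 hf,
      isPeriodicPt_seqShift_iff.2 (periodic_periodicExtension f)⟩
  · rintro ⟨hx, hp⟩
    obtain ⟨f, rfl⟩ := exists_periodicExtension_eq (isPeriodicPt_seqShift_iff.1 hp)
    exact ⟨f, periodicExtension_mem_infiniteWalks.1 hx, rfl⟩

theorem card_aperiodicWalk {n N : ℕ} [NeZero N] (S : Matrix (Fin n) (Fin n) ℕ) :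
    Nat.card (AperiodicWalk S N) =
      {x | x ∈ infiniteWalks S ∧ Function.minimalPeriod seqShift x = N}.ncard := by
  have himage : Set.image periodicExtension {f : ZMod N → Fin n | IsClosedWalk S f ∧ IsAperiodic f} =
      {x | x ∈ infiniteWalks S ∧ Function.minimalPeriod seqShift x = N} := by
    ext x
    constructor
    · rintro ⟨f, ⟨hf, ha⟩, rfl⟩
      exact ⟨periodicExtension_mem_infiniteWalks.2 hf, (isAperiodic_iff_minimalPeriod_eq f).1 ha⟩
    · rintro ⟨hx, hp⟩
      have hper : Function.IsPeriodicPt seqShift N x :=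
        hp ▸ Function.isPeriodicPt_minimalPeriod seqShift x
      obtain ⟨f, rfl⟩ := exists_periodicExtension_eq (isPeriodicPt_seqShift_iff.1 hper)
      exact ⟨f, ⟨periodicExtension_mem_infiniteWalks.1 hx,
        (isAperiodic_iff_minimalPeriod_eq f).2 hp⟩, rfl⟩
  rw [← himage, Set.ncard_image_of_injective _ periodicExtension_injective]
  rfl

/-- Sorting closed walks by their minimal period. -/
theorem sum_divisors_card_aperiodicWalk {n N : ℕ} (hN : 0 < N) (S : Matrix (Fin n) (Fin n) ℕ) :
    ∑ d ∈ N.divisors, Nat.card (AperiodicWalk S d) =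
      {f : ZMod N → Fin n | IsClosedWalk S f}.ncard := by
  classical
  have : NeZero N := ⟨hN.ne'⟩
  have hfin : {x | x ∈ infiniteWalks S ∧ Function.IsPeriodicPt seqShift N x}.Finite := by
    rw [← image_periodicExtension_isClosedWalk]
    exact (Set.toFinite _).image _
  rw [← Set.ncard_image_of_injective _ periodicExtension_injective,
    image_periodicExtension_isClosedWalk, Set.ncard_eq_toFinset_card _ hfin,
    Finset.card_eq_sum_card_fiberwise (f := Function.minimalPeriod seqShift) (t := N.divisors)]
  · refine Finset.sum_congr rfl fun d hd => ?_
    have hdvd := Nat.dvd_of_mem_divisors hd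
    have : NeZero d := ⟨(Nat.pos_of_mem_divisors hd).ne'⟩
    rw [card_aperiodicWalk, ← Set.ncard_coe_finset]
    congr 1
    ext x
    simp only [Finset.coe_filter, Set.Finite.mem_toFinset, Set.mem_ofPred_eq]
    refine ⟨fun h => ⟨⟨h.1, ?_⟩, h.2⟩, fun h => ⟨h.1.1, h.2⟩⟩
    exact Function.isPeriodicPt_iff_minimalPeriod_dvd.2 (h.2 ▸ hdvd)
  · intro x hx
    have hx' := (hfin.mem_toFinset.1 hx).2
    exact Nat.mem_divisors.2 ⟨hx'.minimalPeriod_dvd, NeZero.ne N⟩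

/-- Expansion of a matrix power as a sum over paths, paired with a second matrix. -/
theorem Matrix.sum_prod_path_mul {ι R : Type*} [Fintype ι] [DecidableEq ι] [CommSemiring R]
    (S : Matrix ι ι R) (m : ℕ) (M : Matrix ι ι R) :
    ∑ w : Fin (m + 1) → ι, (∏ k : Fin m, S (w k.castSucc) (w k.succ)) * M (w (Fin.last m)) (w 0) =
      (S ^ m * M).trace := by
  induction m generalizing M with
  | zero =>
    rw [← (Equiv.funUnique (Fin 1) ι).symm.sum_comp]
    simp [Matrix.trace]
  | succ m ih =>
    have htrace : (S ^ (m + 1) * M).trace = (S ^ m * (M * S)).trace := by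
      rw [pow_succ', mul_assoc, Matrix.trace_mul_comm, mul_assoc]
    rw [htrace, ← ih, ← (Fin.consEquiv fun _ => ι).sum_comp, Fintype.sum_prod_type_right]
    refine Finset.sum_congr rfl fun w _ => ?_
    rw [Matrix.mul_apply, Finset.mul_sum]
    refine Finset.sum_congr rfl fun a _ => ?_
    simp only [Fin.consEquiv_apply, Fin.prod_univ_succ, Fin.castSucc_zero, Fin.cons_zero,
      Fin.cons_succ, ← Fin.succ_castSucc, ← Fin.succ_last]
    ring

theorem ncard_isClosedWalk {n N : ℕ} (hN : 0 < N) (S : Matrix (Fin n) (Fin n) ℕ)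
    (hS : ∀ i j, S i j = 0 ∨ S i j = 1) :
    {f : ZMod N → Fin n | IsClosedWalk S f}.ncard = (S ^ N).trace := by
  classical
  obtain ⟨m, rfl⟩ := Nat.exists_eq_succ_of_ne_zero hN.ne'
  change {f : Fin (m + 1) → Fin n | ∀ k, S (f k) (f (k + 1)) = 1}.ncard = _
  rw [Nat.succ_eq_add_one, pow_succ, ← Matrix.sum_prod_path_mul, Set.ncard_eq_toFinset_card',
    Set.toFinset_ofPred, Finset.card_filter]
  refine Finset.sum_congr rfl fun f _ => ?_
  have hprod : (∏ k : Fin m, S (f k.castSucc) (f k.succ)) * S (f (Fin.last m)) (f 0) =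
      ∏ k : Fin (m + 1), S (f k) (f (k + 1)) := by
    simp [Fin.prod_univ_castSucc]
  rw [hprod]
  split_ifs with h
  · exact (Finset.prod_eq_one fun k _ => h k).symm
  · push Not at h
    obtain ⟨k, hk⟩ := h
    exact (Finset.prod_eq_zero (Finset.mem_univ k) ((hS _ _).resolve_right hk)).symm

theorem rotAction_zero {n N : ℕ} (S : Matrix (Fin n) (Fin n) ℕ) (f : AperiodicWalk S N) :
    rotAction S N 0 f = f :=
  Subtype.ext (funext fun k => congrArg f.1 (add_zero k))

theorem rotAction_rotAction {n N : ℕ} (S : Matrix (Fin n) (Fin n) ℕ) (d e : ZMod N)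
    (f : AperiodicWalk S N) :
    rotAction S N d (rotAction S N e f) = rotAction S N (d + e) f :=
  Subtype.ext (funext fun k => congrArg f.1 (add_assoc k d e))

theorem rotAction_injective {n N : ℕ} (S : Matrix (Fin n) (Fin n) ℕ) (f : AperiodicWalk S N) :
    Function.Injective fun d => rotAction S N d f := by
  intro d e h
  by_contra hne
  obtain ⟨k, hk⟩ := f.2.2 (d - e) (sub_ne_zero.2 hne)
  refine hk ?_
  have h' : f.1 (k - e + d) = f.1 (k - e + e) := congrFun (congrArg Subtype.val h) (k - e)
  rwa [sub_add_cancel, sub_add_eq_add_sub, add_sub_assoc] at h'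

theorem rotRel_equivalence {n : ℕ} (S : Matrix (Fin n) (Fin n) ℕ) (N : ℕ) :
    Equivalence (RotRel S N) where
  refl f := ⟨0, (rotAction_zero S f).symm⟩
  symm := by
    rintro f _ ⟨d, rfl⟩
    exact ⟨-d, by rw [rotAction_rotAction, neg_add_cancel, rotAction_zero]⟩
  trans := by
    rintro f _ _ ⟨d, rfl⟩ ⟨e, rfl⟩
    exact ⟨e + d, rotAction_rotAction S e d f⟩

/-- The rotation action is free, so every orbit has `N` elements. -/
theorem mul_card_quot_rotRel {n : ℕ} (S : Matrix (Fin n) (Fin n) ℕ) (N : ℕ) :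
    N * Nat.card (Quot (RotRel S N)) = Nat.card (AperiodicWalk S N) := by
  have hout (q : Quot (RotRel S N)) : Quot.mk _ q.out = q := Quot.out_eq q
  have hrot (d : ZMod N) (f : AperiodicWalk S N) :
      Quot.mk (RotRel S N) (rotAction S N d f) = Quot.mk _ f :=
    (Quot.sound ⟨d, rfl⟩).symm
  have hbij : Function.Bijective
      fun p : ZMod N × Quot (RotRel S N) => rotAction S N p.1 p.2.out := by
    constructor
    · rintro ⟨d, q⟩ ⟨e, r⟩ h
      have hqr : q = r := by
        simpa [hrot, hout] using congrArg (Quot.mk (RotRel S N)) h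
      subst hqr
      exact Prod.ext (rotAction_injective S q.out h) rfl
    · intro f
      obtain ⟨d, hd⟩ := ((rotRel_equivalence S N).quot_mk_eq_iff _ _).1 (hout (Quot.mk _ f))
      exact ⟨(d, Quot.mk _ f), hd.symm⟩
  rw [← Nat.card_congr (Equiv.ofBijective _ hbij), Nat.card_prod, Nat.card_zmod]

theorem card_orbits_aperiodic_closedWalks
    (n : ℕ) (hn : 1 ≤ n) (S : Matrix (Fin n) (Fin n) ℕ)
    (hS : ∀ i j, S i j = 0 ∨ S i j = 1) (N : ℕ) (hN : 0 < N) :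
    (N : ℤ) * Nat.card (Quot (RotRel S N)) =
      ∑ g ∈ N.divisors,
        (ArithmeticFunction.moebius g) * ((Matrix.trace (S ^ (N / g)) : ℕ) : ℤ) := by
  have hsum : ∀ m > 0, ∑ d ∈ m.divisors, (Nat.card (AperiodicWalk S d) : ℤ) =
      ((S ^ m).trace : ℕ) := by
    intro m hm
    rw [← ncard_isClosedWalk hm S hS, ← sum_divisors_card_aperiodicWalk hm S, Nat.cast_sum]
  have hinv := ArithmeticFunction.sum_eq_iff_sum_mul_moebius_eq.1 hsum N hN
  rw [← Nat.cast_mul, mul_card_quot_rotRel, ← hinv]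
  simpa only [Int.cast_id] using Nat.sum_divisorsAntidiagonal fun i j =>
    ArithmeticFunction.moebius i * (((S ^ j).trace : ℕ) : ℤ)
end

section
/- Let R be a commutative ring, T1 an m × m matrix over R and T2 an n × n matrix over R. For every positive integer N, ∑ S(s,T1)·S(t,T2) = S(N, T1 ⊗ T2), where the sum runs over all pairs (s,t) of positive divisors of N with lcm(s,t) = N, and T1 ⊗ T2 denotes the Kronecker product of T1 and T2. -/
open Kronecker

/-- `S(N,T) = ∑_{g ∣ N} μ(g) · Tr(T^{N/g})` for a square matrix `T` over a
commutative ring. -/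
def moebiusTraceSum {R : Type*} [CommRing R] {α : Type*} [Fintype α]
    [DecidableEq α] (T : Matrix α α R) (N : ℕ) : R :=
  ∑ g ∈ N.divisors, (ArithmeticFunction.moebius g) • Matrix.trace (T ^ (N / g))

theorem sum_divisors_moebiusTraceSum {R : Type*} [CommRing R] {α : Type*} [Fintype α]
    [DecidableEq α] (T : Matrix α α R) {N : ℕ} (hN : 0 < N) :
    ∑ d ∈ N.divisors, moebiusTraceSum T d = Matrix.trace (T ^ N) := by
  refine (ArithmeticFunction.sum_eq_iff_sum_smul_moebius_eq (f := moebiusTraceSum T)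
    (g := fun k => Matrix.trace (T ^ k))).2 (fun k _ => ?_) N hN
  exact Nat.sum_divisorsAntidiagonal
    (fun a b => ArithmeticFunction.moebius a • Matrix.trace (T ^ b))

theorem Matrix.kronecker_pow {R : Type*} [CommSemiring R] {α β : Type*} [Fintype α]
    [DecidableEq α] [Fintype β] [DecidableEq β] (A : Matrix α α R) (B : Matrix β β R) (k : ℕ) :
    (A ⊗ₖ B) ^ k = (A ^ k) ⊗ₖ (B ^ k) := by
  induction k with
  | zero => simp
  | succ k ih => rw [pow_succ, pow_succ, pow_succ, ih, Matrix.mul_kronecker_mul]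

/-- Pairs of divisors of `N`, grouped by their least common multiple. -/
theorem Nat.sum_divisors_sum_lcm_eq {M : Type*} [AddCommMonoid M] (F : ℕ × ℕ → M) {N : ℕ}
    (hN : 0 < N) :
    ∑ d ∈ N.divisors, ∑ p ∈ (d.divisors ×ˢ d.divisors).filter (fun p => Nat.lcm p.1 p.2 = d), F p =
      ∑ p ∈ N.divisors ×ˢ N.divisors, F p := by
  rw [← Finset.sum_fiberwise_of_maps_to (s := N.divisors ×ˢ N.divisors) (t := N.divisors)
    (g := fun p => Nat.lcm p.1 p.2)]
  · refine Finset.sum_congr rfl fun d hd => Finset.sum_congr ?_ fun _ _ => rfl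
    have hdN := Nat.dvd_of_mem_divisors hd
    have hd0 := (Nat.pos_of_mem_divisors hd).ne'
    ext ⟨a, b⟩
    simp only [Finset.mem_filter, Finset.mem_product, Nat.mem_divisors]
    constructor
    · rintro ⟨⟨⟨ha, -⟩, hb, -⟩, h⟩
      exact ⟨⟨⟨ha.trans hdN, hN.ne'⟩, hb.trans hdN, hN.ne'⟩, h⟩
    · rintro ⟨-, rfl⟩
      exact ⟨⟨⟨Nat.dvd_lcm_left a b, hd0⟩, Nat.dvd_lcm_right a b, hd0⟩, rfl⟩
  · rintro ⟨a, b⟩ h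
    simp only [Finset.mem_product, Nat.mem_divisors] at h ⊢
    exact ⟨Nat.lcm_dvd h.1.1 h.2.1, hN.ne'⟩

theorem carlitz_relation
    {R : Type*} [CommRing R] (m n : ℕ)
    (T1 : Matrix (Fin m) (Fin m) R) (T2 : Matrix (Fin n) (Fin n) R)
    (N : ℕ) (hN : 0 < N) :
    ∑ p ∈ (N.divisors ×ˢ N.divisors).filter (fun p => Nat.lcm p.1 p.2 = N),
        moebiusTraceSum T1 p.1 * moebiusTraceSum T2 p.2 =
      moebiusTraceSum (T1 ⊗ₖ T2) N := by
  have key := (ArithmeticFunction.sum_eq_iff_sum_smul_moebius_eq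
    (f := fun d => ∑ p ∈ (d.divisors ×ˢ d.divisors).filter (fun p => Nat.lcm p.1 p.2 = d),
      moebiusTraceSum T1 p.1 * moebiusTraceSum T2 p.2)
    (g := fun k => Matrix.trace ((T1 ⊗ₖ T2) ^ k))).1 (fun k hk => ?_) N hN
  · rw [← key]
    exact Nat.sum_divisorsAntidiagonal
      (fun a b => ArithmeticFunction.moebius a • Matrix.trace ((T1 ⊗ₖ T2) ^ b))
  · rw [Nat.sum_divisors_sum_lcm_eq
        (fun p => moebiusTraceSum T1 p.1 * moebiusTraceSum T2 p.2) hk,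
      Matrix.kronecker_pow, Matrix.trace_kronecker, ← sum_divisors_moebiusTraceSum T1 hk,
      ← sum_divisors_moebiusTraceSum T2 hk, Finset.sum_mul_sum, Finset.sum_product]
end

section
/- Let T be a square matrix over ℚ and l a positive integer. For every positive integer N, C(N, T^l) = ∑ (t/N) · C(t,T), where the sum runs over all positive integers t with lcm(l,t) = N·l (all such t divide N·l, so the sum is finite). -/
/-- `C(N,T) = (1/N) ∑_{g ∣ N} μ(g) · Tr(T^{N/g})` for a square matrix `T` over `ℚ`. -/
def cycleCount {α : Type*} [Fintype α] [DecidableEq α]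
    (T : Matrix α α ℚ) (N : ℕ) : ℚ :=
  (∑ g ∈ N.divisors, (ArithmeticFunction.moebius g : ℚ) *
    Matrix.trace (T ^ (N / g))) / N

/-- Möbius inversion characterizes `N ↦ N * cycleCount T N` as the function whose divisor sums are
the traces of the powers of `T`. -/
theorem sum_divisors_eq_trace_iff_eq_mul_cycleCount {α : Type*} [Fintype α] [DecidableEq α]
    (T : Matrix α α ℚ) (f : ℕ → ℚ) :
    (∀ n > 0, ∑ t ∈ n.divisors, f t = Matrix.trace (T ^ n)) ↔
      ∀ n : ℕ, n > 0 → (n : ℚ) * cycleCount T n = f n := by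
  rw [ArithmeticFunction.sum_eq_iff_sum_mul_moebius_eq (g := fun n => Matrix.trace (T ^ n))]
  refine forall₂_congr fun n hn => ?_
  have hn' : (n : ℚ) ≠ 0 := by exact_mod_cast hn.ne'
  rw [cycleCount, mul_div_cancel₀ _ hn', Nat.sum_divisorsAntidiagonal
    (fun a b => (ArithmeticFunction.moebius a : ℚ) * Matrix.trace (T ^ b))]

/-- The divisors `t` of `N * l` are partitioned by the divisor `lcm l t / l` of `N`. -/
theorem sum_divisors_sum_filter_lcm_eq {M : Type*} [AddCommMonoid M] (f : ℕ → M) {l N : ℕ}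
    (hl : 0 < l) (hN : 0 < N) :
    ∑ d ∈ N.divisors, ∑ t ∈ (d * l).divisors.filter (fun t => Nat.lcm l t = d * l), f t =
      ∑ t ∈ (N * l).divisors, f t := by
  have hmaps : ∀ t ∈ (N * l).divisors, Nat.lcm l t / l ∈ N.divisors := by
    intro t ht
    rw [Nat.mem_divisors] at ht ⊢
    refine ⟨(Nat.div_dvd_iff_dvd_mul (Nat.dvd_lcm_left l t) hl).2 ?_, hN.ne'⟩
    rw [mul_comm l N]
    exact Nat.lcm_dvd (dvd_mul_left l N) ht.1
  rw [← Finset.sum_fiberwise_of_maps_to hmaps]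
  refine Finset.sum_congr rfl fun d hd => Finset.sum_congr ?_ fun _ _ => rfl
  have hdN : d ∣ N := Nat.dvd_of_mem_divisors hd
  have hd0 : d ≠ 0 := (Nat.pos_of_mem_divisors hd).ne'
  ext t
  simp only [Finset.mem_filter, Nat.mem_divisors,
    Nat.div_eq_iff_eq_mul_left hl (Nat.dvd_lcm_left l t)]
  constructor
  · rintro ⟨⟨ht, -⟩, h⟩
    exact ⟨⟨ht.trans (Nat.mul_dvd_mul_right hdN l), (Nat.mul_pos hN hl).ne'⟩, h⟩
  · rintro ⟨-, h⟩
    exact ⟨⟨h ▸ Nat.dvd_lcm_right l t, Nat.mul_ne_zero hd0 hl.ne'⟩, h⟩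

theorem metropolis_rota_relation_cycleCount
    {α : Type*} [Fintype α] [DecidableEq α] (T : Matrix α α ℚ)
    (l : ℕ) (hl : 0 < l) (N : ℕ) (hN : 0 < N) :
    cycleCount (T ^ l) N =
      ∑ t ∈ (N * l).divisors.filter (fun t => Nat.lcm l t = N * l),
        ((t : ℚ) / N) * cycleCount T t := by
  have htrace := (sum_divisors_eq_trace_iff_eq_mul_cycleCount T
    (fun n => (n : ℚ) * cycleCount T n)).2 fun _ _ => rfl
  have key := (sum_divisors_eq_trace_iff_eq_mul_cycleCount (T ^ l)
    (fun d => ∑ t ∈ (d * l).divisors.filter (fun t => Nat.lcm l t = d * l),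
      (t : ℚ) * cycleCount T t)).1 (fun n hn => by
        rw [sum_divisors_sum_filter_lcm_eq _ hl hn, htrace _ (Nat.mul_pos hn hl), ← pow_mul,
          mul_comm]) N hN
  have hN' : (N : ℚ) ≠ 0 := by exact_mod_cast hN.ne'
  simp only [div_mul_eq_mul_div, ← Finset.sum_div]
  rw [← key, mul_div_cancel_left₀ _ hN']
end

section
/- Let T1 and T2 be square matrices over ℚ, let r and s be positive integers, and set d = gcd(r,s). For every positive integer N, d · C(N, T1^{s/d} ⊗ T2^{r/d}) = ∑ gcd(r·p, s·q) · C(p,T1) · C(q,T2), where the sum runs over all pairs of positive integers (p,q) satisfying p·q·d = N·gcd(p·r, q·s), and T1 ⊗ T2 denotes the Kronecker product. -/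
open Kronecker

/-- Möbius inversion: `f(k) = k · C(k,T)` is the only solution of `∑_{k ∣ N} f(k) = Tr(T^N)`. -/
theorem sum_divisors_eq_trace_pow_iff {α : Type*} [Fintype α] [DecidableEq α]
    (T : Matrix α α ℚ) (f : ℕ → ℚ) :
    (∀ N > 0, ∑ k ∈ N.divisors, f k = Matrix.trace (T ^ N)) ↔
      ∀ N > 0, N * cycleCount T N = f N := by
  rw [ArithmeticFunction.sum_eq_iff_sum_mul_moebius_eq]
  refine forall₂_congr fun N hN => ?_
  have hN' : (N : ℚ) ≠ 0 := by positivity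
  rw [cycleCount, mul_div_cancel₀ _ hN',
    Nat.sum_divisorsAntidiagonal
      (fun x y => (ArithmeticFunction.moebius x : ℚ) * Matrix.trace (T ^ y))]

theorem sum_divisors_mul_cycleCount {α : Type*} [Fintype α] [DecidableEq α]
    (T : Matrix α α ℚ) {N : ℕ} (hN : 0 < N) :
    ∑ k ∈ N.divisors, k * cycleCount T k = Matrix.trace (T ^ N) :=
  (sum_divisors_eq_trace_pow_iff T fun k => k * cycleCount T k).2 (fun _ _ => rfl) N hN

theorem kronecker_pow_eq {α β : Type*} [Fintype α] [DecidableEq α] [Fintype β] [DecidableEq β]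
    (A : Matrix α α ℚ) (B : Matrix β β ℚ) (k : ℕ) : (A ⊗ₖ B) ^ k = (A ^ k) ⊗ₖ (B ^ k) := by
  induction k with
  | zero => simp
  | succ k ih => rw [pow_succ, pow_succ, pow_succ, ih, Matrix.mul_kronecker_mul]

theorem gcd_mul_mul_dvd_mul {a b : ℕ} (hab : Nat.Coprime b a) (p q : ℕ) :
    Nat.gcd (p * b) (q * a) ∣ p * q := by
  have h : Nat.gcd (p * b) (q * a) ∣ Nat.gcd (p * q * b) (p * q * a) :=
    Nat.dvd_gcd ((Nat.gcd_dvd_left _ _).trans ⟨q, by ring⟩)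
      ((Nat.gcd_dvd_right _ _).trans ⟨p, by ring⟩)
  rwa [Nat.gcd_mul_left, hab.gcd_eq_one, mul_one] at h

theorem mul_dvd_mul_gcd_iff {p q : ℕ} (hp : 0 < p) (hq : 0 < q) (a b N : ℕ) :
    p * q ∣ N * Nat.gcd (p * b) (q * a) ↔ p ∣ a * N ∧ q ∣ b * N := by
  rw [← Nat.gcd_mul_left, Nat.dvd_gcd_iff, show N * (p * b) = p * (b * N) by ring,
    show N * (q * a) = a * N * q by ring, Nat.mul_dvd_mul_iff_left hp,
    Nat.mul_dvd_mul_iff_right hq, and_comm]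

/-- The pairs `(p, q)` with `p ∣ aN` and `q ∣ bN`, grouped by the value of
`pq / gcd(pb, qa)`, which runs over the divisors of `N`. -/
theorem sum_divisors_sum_filter {a b A B N : ℕ} (ha : 0 < a) (hb : 0 < b) (hab : Nat.Coprime b a)
    (hA : a ≤ A) (hB : b ≤ B) (hN : 0 < N) (F : ℕ × ℕ → ℚ) :
    ∑ M ∈ N.divisors, ∑ p ∈ (Finset.Icc 1 (M * A) ×ˢ Finset.Icc 1 (M * B)).filter
        (fun p => p.1 * p.2 = M * Nat.gcd (p.1 * b) (p.2 * a)), F p =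
      ∑ p ∈ (a * N).divisors ×ˢ (b * N).divisors, F p := by
  have gcd_pos {p : ℕ} (hp : 0 < p) (q : ℕ) : 0 < Nat.gcd (p * b) (q * a) :=
    Nat.gcd_pos_of_pos_left _ (by positivity)
  rw [← Finset.sum_fiberwise_of_maps_to (t := N.divisors)
    (g := fun p : ℕ × ℕ => p.1 * p.2 / Nat.gcd (p.1 * b) (p.2 * a))]
  · refine Finset.sum_congr rfl fun M hM => Finset.sum_congr ?_ fun _ _ => rfl
    have hMN := Nat.dvd_of_mem_divisors hM
    have hM0 : 0 < M := Nat.pos_of_mem_divisors hM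
    ext ⟨p, q⟩
    simp only [Finset.mem_filter, Finset.mem_product, Finset.mem_Icc, Nat.mem_divisors]
    constructor
    · rintro ⟨⟨⟨hp, -⟩, hq, -⟩, h⟩
      obtain ⟨h₁, h₂⟩ := (mul_dvd_mul_gcd_iff hp hq a b M).1 h.dvd
      exact ⟨⟨⟨h₁.trans (mul_dvd_mul_left a hMN), by positivity⟩,
        h₂.trans (mul_dvd_mul_left b hMN), by positivity⟩,
        Nat.div_eq_of_eq_mul_left (gcd_pos hp q) h⟩
    · rintro ⟨⟨⟨hp, hp'⟩, hq, hq'⟩, h⟩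
      have hp0 := Nat.pos_of_dvd_of_pos hp (Nat.pos_of_ne_zero hp')
      have hq0 := Nat.pos_of_dvd_of_pos hq (Nat.pos_of_ne_zero hq')
      have h' := (Nat.div_eq_iff_eq_mul_left (gcd_pos hp0 q) (gcd_mul_mul_dvd_mul hab p q)).1 h
      obtain ⟨h₁, h₂⟩ := (mul_dvd_mul_gcd_iff hp0 hq0 a b M).1 h'.dvd
      refine ⟨⟨⟨hp0, (Nat.le_of_dvd (by positivity) h₁).trans ?_⟩, hq0,
        (Nat.le_of_dvd (by positivity) h₂).trans ?_⟩, h'⟩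
      · rw [mul_comm]; gcongr
      · rw [mul_comm]; gcongr
  · rintro ⟨p, q⟩ h
    simp only [Finset.mem_product, Nat.mem_divisors] at h
    obtain ⟨⟨hp, hp'⟩, hq, hq'⟩ := h
    have hp0 := Nat.pos_of_dvd_of_pos hp (Nat.pos_of_ne_zero hp')
    have hq0 := Nat.pos_of_dvd_of_pos hq (Nat.pos_of_ne_zero hq')
    refine Nat.mem_divisors.2 ⟨?_, hN.ne'⟩
    rw [Nat.div_dvd_iff_dvd_mul (gcd_mul_mul_dvd_mul hab p q) (gcd_pos hp0 q), mul_comm _ N]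
    exact (mul_dvd_mul_gcd_iff hp0 hq0 a b N).2 ⟨hp, hq⟩

theorem carlitz_relation_cycleCount_powers
    (m n : ℕ) (T1 : Matrix (Fin m) (Fin m) ℚ) (T2 : Matrix (Fin n) (Fin n) ℚ)
    (r s : ℕ) (hr : 0 < r) (hs : 0 < s) (N : ℕ) (hN : 0 < N) :
    (Nat.gcd r s : ℚ) *
        cycleCount ((T1 ^ (s / Nat.gcd r s)) ⊗ₖ (T2 ^ (r / Nat.gcd r s))) N =
      ∑ p ∈ (Finset.Icc 1 (N * s) ×ˢ Finset.Icc 1 (N * r)).filter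
          (fun p => p.1 * p.2 * Nat.gcd r s = N * Nat.gcd (p.1 * r) (p.2 * s)),
        (Nat.gcd (r * p.1) (s * p.2) : ℚ) *
          cycleCount T1 p.1 * cycleCount T2 p.2 := by
  have hd : 0 < Nat.gcd r s := Nat.gcd_pos_of_pos_left s hr
  have hab := Nat.coprime_div_gcd_div_gcd hd
  have hbd := Nat.div_mul_cancel (Nat.gcd_dvd_left r s)
  have had := Nat.div_mul_cancel (Nat.gcd_dvd_right r s)
  set d := Nat.gcd r s
  set a := s / d
  set b := r / d
  have ha : 0 < a := Nat.pos_of_mul_pos_right (had ▸ hs)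
  have hb : 0 < b := Nat.pos_of_mul_pos_right (hbd ▸ hr)
  have hgcd (p q : ℕ) : Nat.gcd (p * r) (q * s) = Nat.gcd (p * b) (q * a) * d := by
    rw [← hbd, ← had, ← mul_assoc, ← mul_assoc, Nat.gcd_mul_right]
  have hcond (M p q : ℕ) : p * q * d = M * (Nat.gcd (p * b) (q * a) * d) ↔
      p * q = M * Nat.gcd (p * b) (q * a) := by
    rw [← mul_assoc, Nat.mul_left_inj hd.ne']
  simp only [mul_comm r, mul_comm s, hgcd, hcond]
  have hN' : (N : ℚ) ≠ 0 := by positivity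
  have key := (sum_divisors_eq_trace_pow_iff ((T1 ^ a) ⊗ₖ (T2 ^ b)) fun M =>
    ∑ p ∈ (Finset.Icc 1 (M * s) ×ˢ Finset.Icc 1 (M * r)).filter
      (fun p => p.1 * p.2 = M * Nat.gcd (p.1 * b) (p.2 * a)),
      (p.1 * cycleCount T1 p.1) * (p.2 * cycleCount T2 p.2)).1 (fun M hM => by
    rw [sum_divisors_sum_filter ha hb hab (Nat.div_le_self _ _) (Nat.div_le_self _ _) hM,
      kronecker_pow_eq, Matrix.trace_kronecker, ← pow_mul, ← pow_mul,
      ← sum_divisors_mul_cycleCount T1 (by positivity),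
      ← sum_divisors_mul_cycleCount T2 (by positivity), Finset.sum_mul_sum,
      Finset.sum_product]) N hN
  refine mul_left_cancel₀ hN' ?_
  rw [mul_left_comm, key, Finset.mul_sum, Finset.mul_sum]
  refine Finset.sum_congr rfl fun p hp => ?_
  have h : (p.1 * p.2 : ℚ) = N * (Nat.gcd (p.1 * b) (p.2 * a) : ℕ) := by
    exact_mod_cast (Finset.mem_filter.1 hp).2
  push_cast
  linear_combination d * cycleCount T1 p.1 * cycleCount T2 p.2 * h
end
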